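/- Let G be a graph and construct G' as follows: take V, a disjoint copy V' of V, replace each edge vw of G by a path of length 2d between v and w, and join each v ∈ V to its copy v' ∈ V' by a path of length d. If G has a dominating set D of size s, then b(G') ≤ s + 3d. -/

import Mathlib

/-- `G` can be burned in `b` steps: `V(G)` is covered by balls of radii `0, 1, ..., b-1`. -/
def burnable {V : Type*} (G : SimpleGraph V) (b : ℕ) : Prop :=
  ∃ c : Fin b → V, ∀ v, ∃ i : Fin b, G.dist (c i) v ≤ (i : ℕ)

/-- The burning number of `G`. -/
noncomputable def burningNumber {V : Type*} (G : SimpleGraph V) : ℕ :=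
  sInf {b | burnable G b}

/-- Vertex "names" for the domination-reduction graph `G'`: original vertices `V`,
internal vertices `(a, b, k)` of the length-`2d` path replacing an edge `ab` of `G`
(at position `k+1 ∈ {1, ..., 2d-1}` from `a`), and vertices `(w, j)` of the pendant
path of length `d` attached to `w` (at position `j+1 ∈ {1, ..., d}`; the copy `w'` of
`w` is `(w, d-1)`). -/
def DomVert (V : Type*) (d : ℕ) : Type _ :=
  V ⊕ (V × V × Fin (2 * d - 1)) ⊕ (V × Fin d)

/-- Only names corresponding to actual edges of `G` (oriented increasingly) are valid. -/
def domValid {V : Type*} [LT V] (G : SimpleGraph V) (d : ℕ) : DomVert V d → Prop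
  | .inl _ => True
  | .inr (.inl (a, b, _)) => G.Adj a b ∧ a < b
  | .inr (.inr _) => True

/-- The adjacency generating relation of `G'`: consecutive vertices along the subdivided
edges and along the pendant paths. -/
def domRel {V : Type*} [LT V] (G : SimpleGraph V) (d : ℕ) : DomVert V d → DomVert V d → Prop
  | .inl v, .inr (.inl (a, b, k)) =>
      G.Adj a b ∧ a < b ∧ ((v = a ∧ (k : ℕ) = 0) ∨ (v = b ∧ (k : ℕ) = 2 * d - 2))
  | .inr (.inl (a, b, k)), .inr (.inl (a', b', k')) =>
      a = a' ∧ b = b' ∧ G.Adj a b ∧ a < b ∧ ((k : ℕ) + 1 = (k' : ℕ) ∨ (k' : ℕ) + 1 = (k : ℕ))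
  | .inl v, .inr (.inr (w, j)) => v = w ∧ (j : ℕ) = 0
  | .inr (.inr (w, j)), .inr (.inr (w', j')) =>
      w = w' ∧ ((j : ℕ) + 1 = (j' : ℕ) ∨ (j' : ℕ) + 1 = (j : ℕ))
  | _, _ => False

/-- The domination-reduction graph `G'`: each edge of `G` is replaced by a path of length
`2d` and each vertex `v` of `G` is joined to its copy `v'` by a path of length `d`. -/
def domGraph {V : Type*} [LinearOrder V] (G : SimpleGraph V) (d : ℕ) :
    SimpleGraph {x : DomVert V d // domValid G d x} :=
  SimpleGraph.fromRel fun x y => domRel G d x.1 y.1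

/-- The original vertex `v ∈ V` as a vertex of `G'`. -/
def domOrig {V : Type*} [LinearOrder V] (G : SimpleGraph V) (d : ℕ) (v : V) :
    {x : DomVert V d // domValid G d x} :=
  ⟨.inl v, trivial⟩

/-!
Each vertex of `G'` is within distance `d` of some `v ∈ V`, and each `v ∈ V` is within distance
`2d` of `D`, because an edge of `G` becomes a path of length `2d`. Hence the balls of radius `3d`
around the `s` vertices of `D` already cover `G'`, so balls of radii `3d, ..., 3d + s - 1` centered
at these vertices do, whatever the centers of the smaller balls.

Distances are estimated with `edist`, since `dist` is `0` between vertices in different components.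
-/

section Burning

variable {W ι : Type*} {H : SimpleGraph W} [Fintype ι] {c : ι → W} {r : ℕ}

theorem burnable_add_card_of_forall_exists_dist_le [Nonempty W]
    (hc : ∀ x, ∃ i, H.dist (c i) x ≤ r) : burnable H (r + Fintype.card ι) := by
  let e := Fintype.equivFin ι
  refine ⟨Fin.append (fun _ => Classical.arbitrary W) (c ∘ e.symm), fun x => ?_⟩
  obtain ⟨i, hi⟩ := hc x
  refine ⟨Fin.natAdd r (e i), ?_⟩
  simpa only [Fin.append_right, Function.comp_apply, Equiv.symm_apply_apply, Fin.val_natAdd]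
    using hi.trans (Nat.le_add_right r (e i))

theorem burningNumber_le_add_card_of_forall_exists_dist_le
    (hc : ∀ x, ∃ i, H.dist (c i) x ≤ r) : burningNumber H ≤ r + Fintype.card ι := by
  cases isEmpty_or_nonempty W with
  | inl _ =>
    have burnable_zero : burnable H 0 := ⟨Fin.elim0, isEmptyElim⟩
    exact (Nat.sInf_le burnable_zero).trans (Nat.zero_le _)
  | inr _ => exact Nat.sInf_le (burnable_add_card_of_forall_exists_dist_le hc)

end Burning

theorem edist_le_sub_of_forall_adj_succ {W : Type*} {H : SimpleGraph W} {f : ℕ → W} {m n : ℕ}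
    (hmn : m ≤ n) (hf : ∀ i, m ≤ i → i < n → H.Adj (f i) (f (i + 1))) :
    H.edist (f m) (f n) ≤ (n - m : ℕ) := by
  induction n, hmn using Nat.le_induction with
  | base => simp
  | succ n hmn ih =>
    calc H.edist (f m) (f (n + 1))
        ≤ H.edist (f m) (f n) + H.edist (f n) (f (n + 1)) := SimpleGraph.edist_triangle
      _ ≤ (n - m : ℕ) + 1 := by
        gcongr
        · exact ih fun i hmi hin => hf i hmi (by lia)
        · exact (SimpleGraph.edist_eq_one_iff_adj.mpr (hf n hmn (by lia))).le
      _ = (n + 1 - m : ℕ) := by rw [Nat.succ_sub hmn]; norm_cast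

section DomGraph

variable {V : Type*}

theorem not_domRel_self [LT V] (G : SimpleGraph V) (d : ℕ) (x : DomVert V d) :
    ¬ domRel G d x x := by
  rcases x with _ | ⟨_, _, _⟩ | ⟨_, _⟩ <;> simp [domRel]

variable [LinearOrder V] {G : SimpleGraph V} {d : ℕ}

theorem domGraph_adj_of_domRel {x y : {x : DomVert V d // domValid G d x}}
    (hxy : domRel G d x.1 y.1) : (domGraph G d).Adj x y := by
  refine (SimpleGraph.fromRel_adj _ x y).mpr ⟨?_, Or.inl hxy⟩
  rintro rfl
  exact not_domRel_self G d x.1 hxy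

/-- The path of length `d` from `w` to its copy: position `0` is `w` and position `j + 1` is the
vertex named `(w, j)`. Positions beyond `d` get the junk value `w`. -/
def pendantPath (G : SimpleGraph V) (d : ℕ) (w : V) : ℕ → {x : DomVert V d // domValid G d x}
  | 0 => domOrig G d w
  | j + 1 => if hj : j < d then ⟨.inr (.inr (w, ⟨j, hj⟩)), trivial⟩ else domOrig G d w

/-- The path of length `2d` replacing the edge `ab`, where `a < b`: position `0` is `a`, position
`k + 1` is the vertex named `(a, b, k)`, and position `2d`, like all later ones, is `b`. -/
def edgePath (d : ℕ) {a b : V} (hab : G.Adj a b ∧ a < b) :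
    ℕ → {x : DomVert V d // domValid G d x}
  | 0 => domOrig G d a
  | k + 1 => if hk : k < 2 * d - 1 then ⟨.inr (.inl (a, b, ⟨k, hk⟩)), hab⟩ else domOrig G d b

theorem pendantPath_adj_succ (w : V) {i : ℕ} (hi : i < d) :
    (domGraph G d).Adj (pendantPath G d w i) (pendantPath G d w (i + 1)) := by
  apply domGraph_adj_of_domRel
  cases i with
  | zero => simp [pendantPath, hi, domOrig, domRel]
  | succ j => simp [pendantPath, hi, Nat.lt_of_succ_lt hi, domRel]

theorem edgePath_two_mul (hd : 0 < d) {a b : V} (hab : G.Adj a b ∧ a < b) :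
    edgePath d hab (2 * d) = domOrig G d b := by
  obtain ⟨k, hk⟩ : ∃ k, 2 * d = k + 1 := ⟨2 * d - 1, by lia⟩
  simp [hk, edgePath]

theorem edgePath_adj_succ {a b : V} (hab : G.Adj a b ∧ a < b) {i : ℕ} (hi : i < 2 * d) :
    (domGraph G d).Adj (edgePath d hab i) (edgePath d hab (i + 1)) := by
  cases i with
  | zero =>
    have h_first : 0 < 2 * d - 1 := by lia
    apply domGraph_adj_of_domRel
    simp [edgePath, h_first, domOrig, domRel, hab]
  | succ k =>
    have hk : k < 2 * d - 1 := by lia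
    by_cases hk' : k + 1 < 2 * d - 1
    · apply domGraph_adj_of_domRel
      simp [edgePath, hk, hk', domRel, hab]
    · have h_last : k = 2 * d - 2 := by lia
      apply SimpleGraph.Adj.symm
      apply domGraph_adj_of_domRel
      simpa [edgePath, hk, hk', domOrig, domRel, hab] using Or.inr h_last

theorem edist_edgePath_le {a b : V} (hab : G.Adj a b ∧ a < b) {m n : ℕ} (hmn : m ≤ n)
    (hn : n ≤ 2 * d) :
    (domGraph G d).edist (edgePath d hab m) (edgePath d hab n) ≤ (n - m : ℕ) :=
  edist_le_sub_of_forall_adj_succ hmn fun _ _ hi => edgePath_adj_succ hab (hi.trans_le hn)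

theorem edist_domOrig_pendantPath_le (w : V) {n : ℕ} (hn : n ≤ d) :
    (domGraph G d).edist (domOrig G d w) (pendantPath G d w n) ≤ n :=
  edist_le_sub_of_forall_adj_succ (f := pendantPath G d w) (Nat.zero_le n) fun _ _ hi =>
    pendantPath_adj_succ w (hi.trans_le hn)

theorem edist_domOrig_le_of_adj (hd : 0 < d) {a b : V} (hab : G.Adj a b) :
    (domGraph G d).edist (domOrig G d a) (domOrig G d b) ≤ (2 * d : ℕ) := by
  wlog hlt : a < b generalizing a b
  · rw [SimpleGraph.edist_comm]
    exact this hab.symm (hab.ne.lt_or_gt.resolve_left hlt)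
  · rw [← edgePath_two_mul hd ⟨hab, hlt⟩]
    exact edist_edgePath_le ⟨hab, hlt⟩ (Nat.zero_le _) le_rfl

theorem exists_edist_domOrig_edgePath_le (hd : 0 < d) {a b : V} (hab : G.Adj a b ∧ a < b) {n : ℕ}
    (hn : n ≤ 2 * d) :
    ∃ v, (domGraph G d).edist (domOrig G d v) (edgePath d hab n) ≤ d := by
  rcases le_total n d with h_near_a | h_near_b
  · exact ⟨a, (edist_edgePath_le hab (Nat.zero_le n) hn).trans (by exact_mod_cast h_near_a)⟩
  · refine ⟨b, ?_⟩
    rw [← edgePath_two_mul hd hab, SimpleGraph.edist_comm]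
    have h_remaining : 2 * d - n ≤ d := by lia
    exact (edist_edgePath_le hab hn le_rfl).trans (by exact_mod_cast h_remaining)

theorem exists_edist_domOrig_le (x : {x : DomVert V d // domValid G d x}) :
    ∃ v, (domGraph G d).edist (domOrig G d v) x ≤ d := by
  obtain ⟨v | ⟨a, b, k, hk⟩ | ⟨w, j, hj⟩, hx⟩ := x
  · exact ⟨v, SimpleGraph.edist_self.trans_le zero_le⟩
  · have hd : 0 < d := by lia
    have h_internal := exists_edist_domOrig_edgePath_le hd hx (n := k + 1) (by lia)
    simpa only [edgePath, hk, dite_true] using h_internal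
  · have h_pendant := edist_domOrig_pendantPath_le (G := G) w (Nat.succ_le_of_lt hj)
    simp only [pendantPath, hj, dite_true] at h_pendant
    exact ⟨w, h_pendant.trans (by exact_mod_cast hj)⟩

theorem exists_mem_edist_domOrig_le_of_dominating (hd : 0 < d) {D : Set V}
    (hdom : ∀ v, ∃ u ∈ D, u = v ∨ G.Adj u v) (x : {x : DomVert V d // domValid G d x}) :
    ∃ u ∈ D, (domGraph G d).edist (domOrig G d u) x ≤ (3 * d : ℕ) := by
  obtain ⟨v, hvx⟩ := exists_edist_domOrig_le x
  obtain ⟨u, huD, huv⟩ := hdom v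
  refine ⟨u, huD, ?_⟩
  have h_uv : (domGraph G d).edist (domOrig G d u) (domOrig G d v) ≤ (2 * d : ℕ) := by
    rcases huv with rfl | hadj
    · exact SimpleGraph.edist_self.trans_le zero_le
    · exact edist_domOrig_le_of_adj hd hadj
  calc (domGraph G d).edist (domOrig G d u) x
      ≤ (domGraph G d).edist (domOrig G d u) (domOrig G d v) +
          (domGraph G d).edist (domOrig G d v) x := SimpleGraph.edist_triangle
    _ ≤ (2 * d : ℕ) + d := add_le_add h_uv hvx
    _ = (3 * d : ℕ) := by norm_cast; ring

end DomGraph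

theorem stmt_9_general {V : Type*} [LinearOrder V] (G : SimpleGraph V) (d : ℕ) (hd : 0 < d)
    (D : Finset V) (hdom : ∀ v : V, ∃ u ∈ D, u = v ∨ G.Adj u v) :
    burningNumber (domGraph G d) ≤ D.card + 3 * d := by
  have h_cover : ∀ x, ∃ u : D, (domGraph G d).dist (domOrig G d u) x ≤ 3 * d := fun x => by
    obtain ⟨u, huD, hux⟩ := exists_mem_edist_domOrig_le_of_dominating (D := D) hd hdom x
    exact ⟨⟨u, huD⟩, ENat.toNat_le_of_le_natCast hux⟩
  simpa only [Fintype.card_coe, add_comm] using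
    burningNumber_le_add_card_of_forall_exists_dist_le h_cover

/-- if `G` has a dominating set of size `s`, then `b(G') ≤ s + 3d`. -/
theorem stmt_9 {V : Type*} [Fintype V] [LinearOrder V] (G : SimpleGraph V)
    (d : ℕ) (hd : 0 < d) (D : Finset V) (s : ℕ) (hcard : D.card = s)
    (hdom : ∀ v : V, ∃ u ∈ D, u = v ∨ G.Adj u v) :
    burningNumber (domGraph G d) ≤ s + 3 * d :=
  hcard ▸ stmt_9_general G d hd D hdom
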